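/- Let A and B be N×N real symmetric matrices with eigenvalue sequences (λ_k^A) and (λ_k^B) listed in increasing order, and let μ_A = (1/N)∑_{k=1}^N δ_{λ_k^A} and μ_B = (1/N)∑_{k=1}^N δ_{λ_k^B} be the empirical spectral measures. Then the squared L²-Wasserstein distance satisfies W₂(μ_A, μ_B)² ≤ (1/N)·tr((A−B)²). -/

import Mathlib

open MeasureTheory

/-- Squared L²-Wasserstein distance between measures on ℝ,
defined as the infimum over couplings of the integral of |x-y|². -/
noncomputable def W2sq (μ ν : Measure ℝ) : ENNReal :=
  ⨅ π ∈ {π : Measure (ℝ × ℝ) | π.map Prod.fst = μ ∧ π.map Prod.snd = ν},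
    ∫⁻ p, ENNReal.ofReal (|p.1 - p.2| ^ 2) ∂π

lemma hw_row {N : ℕ} (W : Matrix (Fin N) (Fin N) ℝ) (h : W * W.transpose = 1) (i : Fin N) :
    ∑ j, ENNReal.ofReal (W i j ^ 2) = 1 := by
  rw [← ENNReal.ofReal_sum_of_nonneg (fun j _ => sq_nonneg _)]
  have := congrFun (congrFun h i) i
  simp only [Matrix.mul_apply, Matrix.transpose_apply, Matrix.one_apply_eq] at this
  simp only [sq, this, ENNReal.ofReal_one]

lemma hw_alg {N : ℕ} (A B : Matrix (Fin N) (Fin N) ℝ)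
    (hA : A.IsHermitian) (hB : B.IsHermitian) :
    ∃ W : Matrix (Fin N) (Fin N) ℝ, W * W.transpose = 1 ∧ W.transpose * W = 1 ∧
      Matrix.trace ((A - B) * (A - B)) =
        ∑ i, ∑ j, W i j ^ 2 * (hA.eigenvalues i - hB.eigenvalues j) ^ 2 := by
  obtain ⟨U, hU1, hU2, hUA⟩ : ∃ U : Matrix (Fin N) (Fin N) ℝ, U * U.transpose = 1 ∧
      U.transpose * U = 1 ∧ A = U * Matrix.diagonal hA.eigenvalues * U.transpose := by
    refine ⟨hA.eigenvectorUnitary, ?_, ?_, ?_⟩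
    · exact Unitary.coe_mul_star_self hA.eigenvectorUnitary
    · exact Unitary.coe_star_mul_self hA.eigenvectorUnitary
    · exact hA.spectral_theorem
  obtain ⟨V, hV1, hV2, hVB⟩ : ∃ U : Matrix (Fin N) (Fin N) ℝ, U * U.transpose = 1 ∧
      U.transpose * U = 1 ∧ B = U * Matrix.diagonal hB.eigenvalues * U.transpose := by
    refine ⟨hB.eigenvectorUnitary, ?_, ?_, ?_⟩
    · exact Unitary.coe_mul_star_self hB.eigenvectorUnitary
    · exact Unitary.coe_star_mul_self hB.eigenvectorUnitary
    · exact hB.spectral_theorem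
  generalize hA.eigenvalues = a at *
  generalize hB.eigenvalues = b at *
  have hAT : A.transpose = A := hA
  have hBT : B.transpose = B := hB
  have e1 : U.transpose * A = Matrix.diagonal a * U.transpose := by
    rw [hUA, ← mul_assoc, ← mul_assoc, hU2, one_mul]
  have e2 : B * V = V * Matrix.diagonal b := by
    rw [hVB, mul_assoc, hV2, mul_one]
  refine ⟨U.transpose * V, ?_, ?_, ?_⟩
  · rw [Matrix.transpose_mul, Matrix.transpose_transpose, mul_assoc, ← mul_assoc V, hV1, one_mul, hU2]
  · rw [Matrix.transpose_mul, Matrix.transpose_transpose, mul_assoc, ← mul_assoc U, hU1, one_mul, hV2]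
  · set W := U.transpose * V with hW
    have hM : U.transpose * (A - B) * V = Matrix.diagonal a * W - W * Matrix.diagonal b := by
      rw [mul_sub, sub_mul, e1, mul_assoc U.transpose B V, e2, hW, mul_assoc, mul_assoc]
    have key : Matrix.trace ((A - B) * (A - B)) =
        Matrix.trace ((U.transpose * (A - B) * V) * (U.transpose * (A - B) * V).transpose) := by
      simp only [Matrix.transpose_mul, Matrix.transpose_transpose, Matrix.transpose_sub, hAT, hBT]
      have : U.transpose * (A - B) * V * (V.transpose * ((A - B) * U))
          = U.transpose * ((A - B) * (V * V.transpose) * (A - B) * U) := by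
        simp only [mul_assoc]
      rw [this, hV1, mul_one, Matrix.trace_mul_comm U.transpose, mul_assoc _ U, hU1, mul_one]
    rw [key, hM]
    simp only [Matrix.trace, Matrix.diag_apply, Matrix.mul_apply (N := Matrix.transpose _),
      Matrix.transpose_apply, Matrix.sub_apply, Matrix.diagonal_mul, Matrix.mul_diagonal]
    refine Finset.sum_congr rfl fun i _ => Finset.sum_congr rfl fun j _ => ?_
    ring

/-- The squared Wasserstein distance between the empirical spectral measures of
two real symmetric N×N matrices is at most (1/N) tr((A-B)²). -/
theorem wasserstein_hoffman_wielandt {N : ℕ} (hN : 0 < N)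
    (A B : Matrix (Fin N) (Fin N) ℝ)
    (hA : A.IsHermitian) (hB : B.IsHermitian) :
    W2sq ((N : ENNReal)⁻¹ • ∑ k : Fin N, Measure.dirac (hA.eigenvalues k))
         ((N : ENNReal)⁻¹ • ∑ k : Fin N, Measure.dirac (hB.eigenvalues k))
      ≤ ENNReal.ofReal (Matrix.trace ((A - B) * (A - B)) / N) := by
  obtain ⟨W, h1, h2, h3⟩ := hw_alg A B hA hB
  rw [h3]
  generalize hA.eigenvalues = a
  generalize hB.eigenvalues = b
  have r1 := hw_row W h1
  have r2 := hw_row W.transpose (by rwa [Matrix.transpose_transpose])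
  simp only [Matrix.transpose_apply] at r2
  unfold W2sq
  refine (iInf₂_le ((N : ENNReal)⁻¹ • ∑ i, ∑ j, ENNReal.ofReal (W i j ^ 2) •
    Measure.dirac (a i, b j)) ⟨?_, ?_⟩).trans ?_
  rotate_left
  · rw [Measure.map_smul]
    congr 1
    simp only [← Measure.mapₗ_apply_of_measurable measurable_fst, map_sum, map_smul]
    simp only [Measure.mapₗ_apply_of_measurable measurable_fst, Measure.map_dirac' measurable_fst]
    refine Finset.sum_congr rfl fun i _ => ?_
    rw [← Finset.sum_smul, r1, one_smul]
  · rw [Measure.map_smul]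
    congr 1
    simp only [← Measure.mapₗ_apply_of_measurable measurable_snd, map_sum, map_smul]
    simp only [Measure.mapₗ_apply_of_measurable measurable_snd, Measure.map_dirac' measurable_snd]
    rw [Finset.sum_comm]
    refine Finset.sum_congr rfl fun i _ => ?_
    rw [← Finset.sum_smul, r2, one_smul]
  · apply le_of_eq
    have hN' : (0 : ℝ) < N := by exact_mod_cast hN
    rw [lintegral_smul_measure, ENNReal.ofReal_div_of_pos hN', ENNReal.ofReal_natCast,
      ENNReal.div_eq_inv_mul, smul_eq_mul]
    congr 1
    rw [ENNReal.ofReal_sum_of_nonneg (fun i _ => Finset.sum_nonneg fun j _ => by positivity)]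
    simp only [lintegral_finsetSum_measure, lintegral_smul_measure, lintegral_dirac]
    refine Finset.sum_congr rfl fun i _ => ?_
    rw [ENNReal.ofReal_sum_of_nonneg (fun j _ => by positivity)]
    refine Finset.sum_congr rfl fun j _ => ?_
    rw [ENNReal.ofReal_mul (sq_nonneg _), sq_abs, smul_eq_mul]
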